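/- (Theorem 1, assertion 2, fundamental matrix relations) Let Y : ℝ → M_m(ℝ) be differentiable with Y'(t) = Q(t)·Y(t) for all t and Y(0) = E, and suppose M(t)·Y(t)·Φ⁺(0) = Y(t)·Φ⁺(0) for all t ∈ ℝ. Define X(t) := Φ(t)·Y(t)·Φ⁺(0) ∈ M_n(ℝ). Then X is differentiable with X'(t) = P(t)·X(t) for all t, where P(t) := (Φ'(t) + Φ(t)Q(t))·Φ⁺(t), X(0) = E_n, and Y(t)·Φ⁺(0) = Φ⁺(t)·X(t) for all t ∈ ℝ. -/

import Mathlib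

open Matrix

theorem hasDerivAt_matmul_aux {a b c : ℕ} (A A' : ℝ → Matrix (Fin a) (Fin b) ℝ)
    (B B' : ℝ → Matrix (Fin b) (Fin c) ℝ) (t : ℝ)
    (hA : ∀ i j, HasDerivAt (fun s => A s i j) (A' t i j) t)
    (hB : ∀ i j, HasDerivAt (fun s => B s i j) (B' t i j) t) (i : Fin a) (j : Fin c) :
    HasDerivAt (fun s => (A s * B s) i j) ((A' t * B t + A t * B' t) i j) t := by
  simp only [Matrix.mul_apply, Matrix.add_apply, ← Finset.sum_add_distrib]
  exact HasDerivAt.fun_sum fun k _ => (hA i k).fun_mul (hB k j)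

/-- Theorem 1, assertion 2, fundamental matrix relations: if `Mⁿ(t)` is invariant
(expressed via the fundamental matrix `Y` by `M(t)Y(t)Φ⁺(0) = Y(t)Φ⁺(0)`), then
`X(t) = Φ(t)Y(t)Φ⁺(0)` satisfies `X' = P(t)X`, `X(0) = Eₙ`, and
`Y(t)Φ⁺(0) = Φ⁺(t)X(t)`, where `P(t) = (Φ'(t) + Φ(t)Q(t))Φ⁺(t)`. -/
theorem fundamental_matrix_relations (m n : ℕ) (hn : 1 ≤ n) (hnm : n < m)
    (Q : ℝ → Matrix (Fin m) (Fin m) ℝ)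
    (Φ : ℝ → Matrix (Fin n) (Fin m) ℝ) (Φp : ℝ → Matrix (Fin m) (Fin n) ℝ)
    (Φ' : ℝ → Matrix (Fin n) (Fin m) ℝ) (Φp' : ℝ → Matrix (Fin m) (Fin n) ℝ)
    (hQ : ∀ i j, Continuous fun t => Q t i j)
    (hΦ : ∀ t i j, HasDerivAt (fun s => Φ s i j) (Φ' t i j) t)
    (hΦc : ∀ i j, Continuous fun t => Φ' t i j)
    (hΦp : ∀ t i j, HasDerivAt (fun s => Φp s i j) (Φp' t i j) t)
    (hΦpc : ∀ i j, Continuous fun t => Φp' t i j)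
    (hpseudo : ∀ t, Φ t * Φp t = 1)
    (M : ℝ → Matrix (Fin m) (Fin m) ℝ)
    (hM : ∀ t, M t = Φp t * Φ t)
    (Y : ℝ → Matrix (Fin m) (Fin m) ℝ)
    (hY : ∀ t i j, HasDerivAt (fun s => Y s i j) ((Q t * Y t) i j) t)
    (hY0 : Y 0 = 1)
    (hinvar : ∀ t, M t * Y t * Φp 0 = Y t * Φp 0)
    (X : ℝ → Matrix (Fin n) (Fin n) ℝ)
    (hX : ∀ t, X t = Φ t * Y t * Φp 0)
    (P : ℝ → Matrix (Fin n) (Fin n) ℝ)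
    (hP : ∀ t, P t = (Φ' t + Φ t * Q t) * Φp t) :
    (∀ t i j, HasDerivAt (fun s => X s i j) ((P t * X t) i j) t) ∧
    X 0 = 1 ∧
    (∀ t, Y t * Φp 0 = Φp t * X t) := by
  have h3 : ∀ t, Y t * Φp 0 = Φp t * X t := by
    intro t
    rw [hX, ← hinvar t, hM]
    simp only [Matrix.mul_assoc]
  refine ⟨?_, ?_, h3⟩
  · intro t i j
    have h1 := hasDerivAt_matmul_aux Φ Φ' Y (fun t => Q t * Y t) t (hΦ t) (hY t)
    have h2 := hasDerivAt_matmul_aux (fun s => Φ s * Y s)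
      (fun t => Φ' t * Y t + Φ t * (Q t * Y t)) (fun _ => Φp 0) (fun _ => 0) t h1
      (fun i j => hasDerivAt_const _ _) i j
    have e : P t * X t = (Φ' t * Y t + Φ t * (Q t * Y t)) * Φp 0 + Φ t * Y t * (0 : Matrix (Fin m) (Fin n) ℝ) := by
      rw [hP, Matrix.mul_assoc, ← h3, Matrix.mul_zero, add_zero]
      simp only [Matrix.add_mul, Matrix.mul_assoc]
    rw [e]
    simp only [hX]
    exact h2
  · rw [hX, hY0, Matrix.mul_one, hpseudo]
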